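/- Let a, a', b > 0, and let X be a random variable valued in (0,1) with distribution μ_{a,a',b}. Then for all real t with −b < t < a', E(X^t) = ₃F₂(a',a'−t,b;a'+b,a+a';1)/₃F₂(a',a',b;a'+b,a+a';1). -/

import Mathlib

open MeasureTheory ProbabilityTheory Real Set Filter Topology

noncomputable def gammaDens (p σ y : ℝ) : ℝ :=
  if 0 < y then σ ^ p / Real.Gamma p * Real.exp (-(σ * y)) * y ^ (p - 1) else 0

noncomputable def gammaM (p σ : ℝ) : Measure ℝ :=
  MeasureTheory.volume.withDensity fun y => ENNReal.ofReal (gammaDens p σ y)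

noncomputable def beta1Dens (p q x : ℝ) : ℝ :=
  if 0 < x ∧ x < 1 then
    Real.Gamma (p + q) / (Real.Gamma p * Real.Gamma q) * x ^ (p - 1) * (1 - x) ^ (q - 1)
  else 0

noncomputable def beta1 (p q : ℝ) : Measure ℝ :=
  MeasureTheory.volume.withDensity fun x => ENNReal.ofReal (beta1Dens p q x)

noncomputable def beta2Dens (p q y : ℝ) : ℝ :=
  if 0 < y then
    Real.Gamma (p + q) / (Real.Gamma p * Real.Gamma q) * y ^ (p - 1) * (1 + y) ^ (-(p + q))
  else 0

noncomputable def beta2 (p q : ℝ) : Measure ℝ :=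
  MeasureTheory.volume.withDensity fun y => ENNReal.ofReal (beta2Dens p q y)

/-- Pochhammer (rising factorial) symbol `(a)_n`. -/
noncomputable def poch (a : ℝ) (n : ℕ) : ℝ := ∏ i ∈ Finset.range n, (a + (i : ℝ))

/-- Gauss hypergeometric function `₂F₁(a,b;c;x)`. -/
noncomputable def F21 (a b c x : ℝ) : ℝ :=
  ∑' n : ℕ, poch a n * poch b n / ((n.factorial : ℝ) * poch c n) * x ^ n

/-- Generalized hypergeometric `₃F₂(a₁,a₂,a₃;b₁,b₂;1)` at unit argument. -/
noncomputable def F32one (a1 a2 a3 b1 b2 : ℝ) : ℝ :=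
  ∑' n : ℕ, poch a1 n * poch a2 n * poch a3 n /
    ((n.factorial : ℝ) * poch b1 n * poch b2 n)

/-- Normalizing constant of the real beta-hypergeometric distribution. -/
noncomputable def Cbh (a a' b : ℝ) : ℝ :=
  Real.Gamma (a + b) / (Real.Gamma a * Real.Gamma b * F32one a a b (a + b) (a + a'))

noncomputable def bhDens (a a' b x : ℝ) : ℝ :=
  if 0 < x ∧ x < 1 then
    Cbh a a' b * x ^ (a - 1) * (1 - x) ^ (b - 1) * F21 a b (a + a') x
  else 0

/-- The real beta-hypergeometric distribution `μ_{a,a',b}`. -/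
noncomputable def bhMeasure (a a' b : ℝ) : Measure ℝ :=
  MeasureTheory.volume.withDensity fun x => ENNReal.ofReal (bhDens a a' b x)

/-! Write `B` for the Beta function. Expanding binomial series and integrating termwise,
`∫∫ x^(p-1) (1-x)^(q-1) y^(r-1) (1-y)^(s-1) (1-xy)^(-e) dx dy` over the unit square equals
`B(p,q) B(r,s) ₃F₂(p,e,r; r+s,p+q; 1)`. The involution `(x, y) ↦ (1 - xy, (1-x)/(1-xy))` of the
square carries this integrand to the one with parameters `(q+s-e, r, q, s, r+s-p)`; equating the
two series gives Thomae's transformation. By Euler's integral for `₂F₁`, the Mellin transform of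
`μ_{a,a',b}` is, up to normalization, the integral with parameters `(a+t, b, a, a', b)`, which the
involution takes to `(a', a, b, a', a'-t)`. Since the total mass is `1`, the value at `t = 0`
supplies the denominator. -/

open scoped ENNReal Asymptotics

section Pochhammer

lemma poch_pos {a : ℝ} (ha : 0 < a) (n : ℕ) : 0 < poch a n :=
  Finset.prod_pos fun i _ => by positivity

lemma poch_succ (a : ℝ) (n : ℕ) : poch a (n + 1) = poch a n * (a + n) :=
  Finset.prod_range_succ _ _

lemma poch_le_poch {a c : ℝ} (ha : 0 ≤ a) (h : a ≤ c) (n : ℕ) : poch a n ≤ poch c n :=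
  Finset.prod_le_prod (fun i _ => by positivity) fun i _ => by linarith

lemma poch_one (n : ℕ) : poch 1 n = (n.factorial : ℝ) := by
  induction n with
  | zero => simp [poch]
  | succ n ih => rw [poch_succ, ih, Nat.factorial_succ]; push_cast; ring

lemma poch_eq_ascPochhammer_eval (a : ℝ) (n : ℕ) : poch a n = (ascPochhammer ℝ n).eval a := by
  induction n with
  | zero => simp [poch]
  | succ n ih => rw [poch_succ, ascPochhammer_succ_eval, ih]

lemma Gamma_add_natCast_eq_poch_mul {a : ℝ} (ha : 0 < a) (n : ℕ) :
    Gamma (a + n) = poch a n * Gamma a := by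
  induction n with
  | zero => simp [poch]
  | succ n ih =>
    have h : a + (n : ℝ) ≠ 0 := by positivity
    rw [poch_succ, Nat.cast_succ, ← add_assoc, Gamma_add_one h, ih]
    ring

lemma poch_succ_isEquivalent {a : ℝ} (ha : 0 < a) :
    (fun n : ℕ => poch a (n + 1)) ~[atTop]
      fun n : ℕ => (n : ℝ) ^ a * (n.factorial : ℝ) / Gamma a := by
  have hΓ : Gamma a ≠ 0 := (Gamma_pos_of_pos ha).ne'
  have hseq : GammaSeq a ~[atTop] fun _ => Gamma a :=
    (Asymptotics.isEquivalent_const_iff_tendsto hΓ).2 (GammaSeq_tendsto_Gamma a)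
  have hdiv := (Asymptotics.IsEquivalent.refl
    (u := fun n : ℕ => (n : ℝ) ^ a * (n.factorial : ℝ))).div hseq
  refine hdiv.congr_left ?_
  filter_upwards [eventually_gt_atTop 0] with n hn
  rw [Pi.div_apply, GammaSeq, ← poch, div_div_cancel₀ (by positivity)]

end Pochhammer

section Beta

lemma beta_comm (p q : ℝ) : beta p q = beta q p := by
  rw [beta, beta, mul_comm, add_comm]

lemma beta_add_natCast {p q : ℝ} (hp : 0 < p) (hq : 0 < q) (n : ℕ) :
    beta (p + n) q = beta p q * (poch p n / poch (p + q) n) := by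
  rw [beta, beta, Gamma_add_natCast_eq_poch_mul hp, add_right_comm,
    Gamma_add_natCast_eq_poch_mul (add_pos hp hq)]
  field_simp

lemma lintegral_rpow_mul_one_sub_rpow {p q : ℝ} (hp : 0 < p) (hq : 0 < q) :
    ∫⁻ x in Ioo (0 : ℝ) 1, ENNReal.ofReal (x ^ (p - 1) * (1 - x) ^ (q - 1)) =
      ENNReal.ofReal (beta p q) := by
  have hB := beta_pos hp hq
  have hpdf : ENNReal.ofReal (beta p q)⁻¹ *
      ∫⁻ x in Ioo (0 : ℝ) 1, ENNReal.ofReal (x ^ (p - 1) * (1 - x) ^ (q - 1)) = 1 := by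
    rw [← lintegral_betaPDF_eq_one hp hq, lintegral_betaPDF,
      ← lintegral_const_mul _ (by fun_prop)]
    simp_rw [← ENNReal.ofReal_mul (inv_nonneg.2 hB.le), one_div, mul_assoc]
  rw [ENNReal.ofReal_inv_of_pos hB] at hpdf
  simpa using ENNReal.eq_inv_of_mul_eq_one_left ((mul_comm _ _).trans hpdf)

end Beta

section Series

lemma hasSum_poch_div_factorial_mul_pow (b : ℝ) {z : ℝ} (hz : |z| < 1) :
    HasSum (fun n : ℕ => poch b n / (n.factorial : ℝ) * z ^ n) ((1 - z) ^ (-b)) := by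
  have hchoose (n : ℕ) : Ring.choose (b + n - 1) n = poch b n / (n.factorial : ℝ) := by
    have h := Ring.factorial_nsmul_multichoose_eq_ascPochhammer b n
    rw [Polynomial.ascPochhammer_smeval_eq_eval, ← poch_eq_ascPochhammer_eval, nsmul_eq_mul] at h
    rw [Ring.choose, show b + (n : ℝ) - 1 - n + 1 = b by ring, ← h]
    field_simp
  have hsum := (one_div_one_sub_rpow_hasFPowerSeriesOnBall_zero b).hasSum (y := z)
    (by simpa [enorm_eq_nnnorm, ← NNReal.coe_lt_coe] using hz)
  rw [rpow_neg (by linarith [(abs_lt.1 hz).2])]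
  simpa [FormalMultilinearSeries.ofScalars, hchoose] using hsum

lemma ofReal_one_sub_rpow_neg {b z : ℝ} (hb : 0 < b) (hz₀ : 0 ≤ z) (hz₁ : z < 1) :
    ENNReal.ofReal ((1 - z) ^ (-b)) =
      ∑' n : ℕ, ENNReal.ofReal (poch b n / (n.factorial : ℝ) * z ^ n) := by
  have hsum := hasSum_poch_div_factorial_mul_pow b (abs_lt.2 ⟨by linarith, hz₁⟩)
  rw [← hsum.tsum_eq, ENNReal.ofReal_tsum_of_nonneg _ hsum.summable]
  intro n
  have := poch_pos hb n
  positivity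

lemma measurable_F21 (a b c : ℝ) : Measurable (F21 a b c) :=
  Measurable.tsum fun n => by fun_prop

lemma F21_term_nonneg {a b c x : ℝ} (ha : 0 < a) (hb : 0 < b) (hc : 0 < c) (hx : 0 ≤ x) (n : ℕ) :
    0 ≤ poch a n * poch b n / ((n.factorial : ℝ) * poch c n) * x ^ n := by
  have := poch_pos ha n
  have := poch_pos hb n
  have := poch_pos hc n
  positivity

lemma ofReal_F21 {a b c x : ℝ} (ha : 0 < a) (hb : 0 < b) (hac : a ≤ c) (hx₀ : 0 ≤ x)
    (hx₁ : x < 1) :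
    ENNReal.ofReal (F21 a b c x) =
      ∑' n : ℕ, ENNReal.ofReal (poch a n * poch b n / ((n.factorial : ℝ) * poch c n) * x ^ n) := by
  have hnonneg := F21_term_nonneg ha hb (ha.trans_le hac) hx₀
  have hbinom := hasSum_poch_div_factorial_mul_pow b (abs_lt.2 ⟨by linarith, hx₁⟩)
  refine ENNReal.ofReal_tsum_of_nonneg hnonneg
    (Summable.of_nonneg_of_le hnonneg (fun n => ?_) hbinom.summable)
  have := poch_pos hb n
  have := poch_pos (ha.trans_le hac) n
  calc poch a n * poch b n / ((n.factorial : ℝ) * poch c n) * x ^ n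
      ≤ poch c n * poch b n / ((n.factorial : ℝ) * poch c n) * x ^ n := by
        gcongr
        exact poch_le_poch ha.le hac n
    _ = poch b n / (n.factorial : ℝ) * x ^ n := by field_simp

/-- The series `₃F₂(a₁,a₂,a₃;b₁,b₂;1)` with positive parameters, valued in `[0,∞]` so that it is
`∞` where it diverges, whereas `F32one` is then `0`. -/
noncomputable def F32oneENN (a₁ a₂ a₃ b₁ b₂ : ℝ) : ℝ≥0∞ :=
  ∑' n : ℕ, ENNReal.ofReal
    (poch a₁ n * poch a₂ n * poch a₃ n / ((n.factorial : ℝ) * poch b₁ n * poch b₂ n))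

lemma F32oneENN_swap (a₁ a₂ a₃ b₁ b₂ : ℝ) :
    F32oneENN a₁ a₂ a₃ b₁ b₂ = F32oneENN a₁ a₃ a₂ b₂ b₁ := by
  simp only [F32oneENN, mul_right_comm]

variable {a₁ a₂ a₃ b₁ b₂ : ℝ}

lemma F32one_term_pos (h₁ : 0 < a₁) (h₂ : 0 < a₂) (h₃ : 0 < a₃) (k₁ : 0 < b₁) (k₂ : 0 < b₂)
    (n : ℕ) :
    0 < poch a₁ n * poch a₂ n * poch a₃ n / ((n.factorial : ℝ) * poch b₁ n * poch b₂ n) := by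
  have := poch_pos h₁ n
  have := poch_pos h₂ n
  have := poch_pos h₃ n
  have := poch_pos k₁ n
  have := poch_pos k₂ n
  positivity

lemma toReal_F32oneENN (h₁ : 0 < a₁) (h₂ : 0 < a₂) (h₃ : 0 < a₃) (k₁ : 0 < b₁) (k₂ : 0 < b₂) :
    (F32oneENN a₁ a₂ a₃ b₁ b₂).toReal = F32one a₁ a₂ a₃ b₁ b₂ := by
  rw [F32oneENN, ENNReal.tsum_toReal_eq fun _ => ENNReal.ofReal_ne_top, F32one]
  exact tsum_congr fun n => ENNReal.toReal_ofReal (F32one_term_pos h₁ h₂ h₃ k₁ k₂ n).le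

lemma summable_F32one_term (h₁ : 0 < a₁) (h₂ : 0 < a₂) (h₃ : 0 < a₃) (k₁ : 0 < b₁) (k₂ : 0 < b₂)
    (h : a₁ + a₂ + a₃ < b₁ + b₂) :
    Summable fun n : ℕ =>
      poch a₁ n * poch a₂ n * poch a₃ n / ((n.factorial : ℝ) * poch b₁ n * poch b₂ n) := by
  have hequiv := (((poch_succ_isEquivalent h₁).mul (poch_succ_isEquivalent h₂)).mul
    (poch_succ_isEquivalent h₃)).div (((poch_succ_isEquivalent one_pos).mul
    (poch_succ_isEquivalent k₁)).mul (poch_succ_isEquivalent k₂))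
  have hpow : Summable fun n : ℕ => Gamma b₁ * Gamma b₂ / (Gamma a₁ * Gamma a₂ * Gamma a₃) *
      (n : ℝ) ^ (a₁ + a₂ + a₃ - (1 + b₁ + b₂)) :=
    (summable_nat_rpow.2 (by linarith)).mul_left _
  simp_rw [← poch_one]
  refine (summable_nat_add_iff 1).1 ((hequiv.congr_right ?_).summable_iff_nat.2 hpow)
  filter_upwards [eventually_gt_atTop 0] with n hn
  have hn' : (0 : ℝ) < n := by exact_mod_cast hn
  simp only [Pi.div_apply, Pi.mul_apply, Gamma_one]
  rw [rpow_sub hn', rpow_add hn', rpow_add hn', rpow_add hn', rpow_add hn']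
  field_simp

lemma ofReal_F32one (h₁ : 0 < a₁) (h₂ : 0 < a₂) (h₃ : 0 < a₃) (k₁ : 0 < b₁) (k₂ : 0 < b₂)
    (h : a₁ + a₂ + a₃ < b₁ + b₂) :
    ENNReal.ofReal (F32one a₁ a₂ a₃ b₁ b₂) = F32oneENN a₁ a₂ a₃ b₁ b₂ :=
  ENNReal.ofReal_tsum_of_nonneg (fun n => (F32one_term_pos h₁ h₂ h₃ k₁ k₂ n).le)
    (summable_F32one_term h₁ h₂ h₃ k₁ k₂ h)

lemma F32one_pos (h₁ : 0 < a₁) (h₂ : 0 < a₂) (h₃ : 0 < a₃) (k₁ : 0 < b₁) (k₂ : 0 < b₂)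
    (h : a₁ + a₂ + a₃ < b₁ + b₂) :
    0 < F32one a₁ a₂ a₃ b₁ b₂ :=
  (summable_F32one_term h₁ h₂ h₃ k₁ k₂ h).tsum_pos
    (fun n => (F32one_term_pos h₁ h₂ h₃ k₁ k₂ n).le) 0 (F32one_term_pos h₁ h₂ h₃ k₁ k₂ 0)

end Series

section EulerIntegrals

lemma lintegral_euler_F21 {r s e x : ℝ} (hr : 0 < r) (hs : 0 < s) (he : 0 < e) (hx₀ : 0 < x)
    (hx₁ : x < 1) :
    ∫⁻ y in Ioo (0 : ℝ) 1,
        ENNReal.ofReal (y ^ (r - 1) * (1 - y) ^ (s - 1) * (1 - x * y) ^ (-e)) =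
      ENNReal.ofReal (beta r s * F21 r e (r + s) x) := by
  have hexpand : ∀ y ∈ Ioo (0 : ℝ) 1,
      ENNReal.ofReal (y ^ (r - 1) * (1 - y) ^ (s - 1) * (1 - x * y) ^ (-e)) =
      ∑' n : ℕ, ENNReal.ofReal (poch e n / (n.factorial : ℝ) * x ^ n) *
        ENNReal.ofReal (y ^ (r + n - 1) * (1 - y) ^ (s - 1)) := by
    rintro y ⟨hy₀, hy₁⟩
    rw [ENNReal.ofReal_mul (by positivity),
      ofReal_one_sub_rpow_neg he (by positivity) (by nlinarith), ← ENNReal.tsum_mul_left]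
    refine tsum_congr fun n => ?_
    have := poch_pos he n
    rw [← ENNReal.ofReal_mul (by positivity), ← ENNReal.ofReal_mul (by positivity),
      add_sub_right_comm, rpow_add hy₀, rpow_natCast, mul_pow]
    congr 1
    ring
  have hB := beta_pos hr hs
  rw [setLIntegral_congr_fun measurableSet_Ioo hexpand, lintegral_tsum fun n => by fun_prop,
    ENNReal.ofReal_mul hB.le, ofReal_F21 hr he (by linarith) hx₀.le hx₁, ← ENNReal.tsum_mul_left]
  refine tsum_congr fun n => ?_
  have := poch_pos he n
  rw [lintegral_const_mul _ (by fun_prop), lintegral_rpow_mul_one_sub_rpow (by positivity) hs,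
    beta_add_natCast hr hs, ← ENNReal.ofReal_mul (by positivity), ← ENNReal.ofReal_mul hB.le]
  congr 1
  field_simp

lemma lintegral_euler_F32one {p q r e c : ℝ} (hp : 0 < p) (hq : 0 < q) (hr : 0 < r) (he : 0 < e)
    (hrc : r ≤ c) :
    ∫⁻ x in Ioo (0 : ℝ) 1, ENNReal.ofReal (x ^ (p - 1) * (1 - x) ^ (q - 1) * F21 r e c x) =
      ENNReal.ofReal (beta p q) * F32oneENN p r e (p + q) c := by
  have hc := hr.trans_le hrc
  have hexpand : ∀ x ∈ Ioo (0 : ℝ) 1,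
      ENNReal.ofReal (x ^ (p - 1) * (1 - x) ^ (q - 1) * F21 r e c x) =
      ∑' n : ℕ, ENNReal.ofReal (poch r n * poch e n / ((n.factorial : ℝ) * poch c n)) *
        ENNReal.ofReal (x ^ (p + n - 1) * (1 - x) ^ (q - 1)) := by
    rintro x ⟨hx₀, hx₁⟩
    rw [ENNReal.ofReal_mul (by positivity), ofReal_F21 hr he hrc hx₀.le hx₁,
      ← ENNReal.tsum_mul_left]
    refine tsum_congr fun n => ?_
    have := poch_pos hr n
    have := poch_pos he n
    have := poch_pos hc n
    rw [← ENNReal.ofReal_mul (by positivity), ← ENNReal.ofReal_mul (by positivity),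
      add_sub_right_comm, rpow_add hx₀, rpow_natCast]
    congr 1
    ring
  rw [setLIntegral_congr_fun measurableSet_Ioo hexpand, lintegral_tsum fun n => by fun_prop,
    F32oneENN, ← ENNReal.tsum_mul_left]
  refine tsum_congr fun n => ?_
  have := poch_pos hr n
  have := poch_pos he n
  have := poch_pos hc n
  have hB := beta_pos hp hq
  rw [lintegral_const_mul _ (by fun_prop), lintegral_rpow_mul_one_sub_rpow (by positivity) hq,
    beta_add_natCast hp hq, ← ENNReal.ofReal_mul (by positivity), ← ENNReal.ofReal_mul hB.le]
  congr 1
  field_simp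

end EulerIntegrals

section Thomae

lemma setLIntegral_Ioo_one_sub_mul {x : ℝ} (hx : 0 < x) (g : ℝ → ℝ≥0∞) :
    ∫⁻ w in Ioo (1 - x) 1, g w =
      ∫⁻ y in Ioo (0 : ℝ) 1, ENNReal.ofReal x * g (1 - x * y) := by
  have himage : (fun y => 1 - x * y) '' Ioo (0 : ℝ) 1 = Ioo (1 - x) 1 := by
    rw [← image_image (fun z => 1 - z) (fun y => x * y), image_mul_left_Ioo hx,
      image_const_sub_Ioo, mul_zero, mul_one, sub_zero]
  rw [← himage, lintegral_image_eq_lintegral_abs_deriv_mul measurableSet_Ioo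
    (fun y _ => (((hasDerivAt_id' y).const_mul x).const_sub 1).hasDerivWithinAt)
    (fun y _ z _ h => by simpa [hx.ne'] using h)]
  simp [abs_of_pos hx]

-- With `w = 1 - x * y` and `u = (1 - x) / (1 - x * y)` one has `x = 1 - w * u`. Both iterated
-- integrals are the integral of `G` over the triangle `{(x, w) | x < 1, w < 1, 1 < x + w}`.
lemma lintegral_unitSquare_involution {G : ℝ → ℝ → ℝ≥0∞}
    (hG : Measurable (Function.uncurry G)) :
    ∫⁻ x in Ioo (0 : ℝ) 1, ∫⁻ y in Ioo (0 : ℝ) 1, ENNReal.ofReal x * G x (1 - x * y) =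
      ∫⁻ w in Ioo (0 : ℝ) 1, ∫⁻ u in Ioo (0 : ℝ) 1, ENNReal.ofReal w * G (1 - w * u) w := by
  have hslice (H : ℝ → ℝ≥0∞) {x : ℝ} (hx : x ∈ Ioo (0 : ℝ) 1) :
      ∫⁻ y in Ioo (0 : ℝ) 1, ENNReal.ofReal x * H (1 - x * y) =
        ∫⁻ w in Ioo (0 : ℝ) 1, (Ioi (1 - x)).indicator H w := by
    have hinter : Ioi (1 - x) ∩ Ioo 0 1 = Ioo (1 - x) 1 := by
      ext w
      simp only [mem_inter_iff, mem_Ioi, mem_Ioo]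
      grind
    rw [setLIntegral_indicator measurableSet_Ioi, hinter, setLIntegral_Ioo_one_sub_mul hx.1]
  have hsymm (x w : ℝ) :
      (Ioi (1 - x)).indicator (G x) w = (Ioi (1 - w)).indicator (fun x => G x w) x := by
    simp only [indicator_apply, mem_Ioi, sub_lt_comm]
  have hmeas : Measurable (Function.uncurry fun x w => (Ioi (1 - x)).indicator (G x) w) :=
    hG.indicator (measurableSet_lt (measurable_fst.const_sub 1) measurable_snd)
  rw [setLIntegral_congr_fun measurableSet_Ioo fun x hx => hslice (G x) hx,
    setLIntegral_congr_fun measurableSet_Ioo fun w hw => hslice (fun x => G x w) hw,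
    lintegral_lintegral_swap hmeas.aemeasurable]
  simp_rw [hsymm]

/-- The double Euler integral representing `₃F₂(p,e,r;r+s,p+q;1)` up to Beta factors. -/
noncomputable def doubleEuler (p q r s e : ℝ) : ℝ≥0∞ :=
  ∫⁻ x in Ioo (0 : ℝ) 1, ∫⁻ y in Ioo (0 : ℝ) 1,
    ENNReal.ofReal (x ^ (p - 1) * (1 - x) ^ (q - 1) *
      (y ^ (r - 1) * (1 - y) ^ (s - 1) * (1 - x * y) ^ (-e)))

lemma beta_mul_lintegral_F21 (p q : ℝ) {r s e : ℝ} (hr : 0 < r) (hs : 0 < s) (he : 0 < e) :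
    ENNReal.ofReal (beta r s) * ∫⁻ x in Ioo (0 : ℝ) 1,
        ENNReal.ofReal (x ^ (p - 1) * (1 - x) ^ (q - 1) * F21 r e (r + s) x) =
      doubleEuler p q r s e := by
  rw [← lintegral_const_mul' _ _ ENNReal.ofReal_ne_top, doubleEuler]
  refine setLIntegral_congr_fun measurableSet_Ioo fun x ⟨hx₀, hx₁⟩ => ?_
  have hpos : 0 ≤ x ^ (p - 1) * (1 - x) ^ (q - 1) := by positivity
  simp_rw [ENNReal.ofReal_mul hpos]
  rw [lintegral_const_mul _ (by fun_prop), lintegral_euler_F21 hr hs he hx₀ hx₁,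
    ENNReal.ofReal_mul (beta_pos hr hs).le]
  ring

lemma doubleEuler_eq_F32oneENN {p q r s e : ℝ} (hp : 0 < p) (hq : 0 < q) (hr : 0 < r)
    (hs : 0 < s) (he : 0 < e) :
    doubleEuler p q r s e =
      ENNReal.ofReal (beta r s) *
        (ENNReal.ofReal (beta p q) * F32oneENN p e r (r + s) (p + q)) := by
  rw [← beta_mul_lintegral_F21 p q hr hs he, lintegral_euler_F32one hp hq hr he (by linarith),
    F32oneENN_swap]

/-- The integrand of `doubleEuler p q r s e` in the coordinates `(x, 1 - x * y)`, divided by the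
Jacobian `x`. -/
noncomputable def triangleKernel (p q r s e x w : ℝ) : ℝ :=
  x ^ (p - r - s) * (1 - x) ^ (q - 1) * w ^ (-e) * (1 - w) ^ (r - 1) * (x + w - 1) ^ (s - 1)

lemma triangleKernel_symm (p q r s e x w : ℝ) :
    triangleKernel (q + s - e) r q s (r + s - p) w x = triangleKernel p q r s e x w := by
  simp only [triangleKernel]
  ring_nf

lemma mul_triangleKernel (p q r s e : ℝ) {x y : ℝ} (hx : 0 < x) (hy : y ∈ Ioo (0 : ℝ) 1) :
    x * triangleKernel p q r s e x (1 - x * y) =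
      x ^ (p - 1) * (1 - x) ^ (q - 1) *
        (y ^ (r - 1) * (1 - y) ^ (s - 1) * (1 - x * y) ^ (-e)) := by
  have hpow : x ^ (p - 1) = x ^ (p - r - s) * x * x ^ (r - 1) * x ^ (s - 1) := by
    rw [← rpow_add_one hx.ne', ← rpow_add hx, ← rpow_add hx]
    congr 1
    ring
  rw [triangleKernel, sub_sub_cancel, show x + (1 - x * y) - 1 = x * (1 - y) by ring,
    mul_rpow hx.le hy.1.le, mul_rpow hx.le (sub_pos.2 hy.2).le, hpow]
  ring

lemma doubleEuler_eq_lintegral_triangleKernel (p q r s e : ℝ) :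
    doubleEuler p q r s e = ∫⁻ x in Ioo (0 : ℝ) 1, ∫⁻ y in Ioo (0 : ℝ) 1,
      ENNReal.ofReal x * ENNReal.ofReal (triangleKernel p q r s e x (1 - x * y)) := by
  refine setLIntegral_congr_fun measurableSet_Ioo fun x hx =>
    setLIntegral_congr_fun measurableSet_Ioo fun y hy => ?_
  rw [← ENNReal.ofReal_mul hx.1.le, mul_triangleKernel p q r s e hx.1 hy]

lemma doubleEuler_thomae (p q r s e : ℝ) :
    doubleEuler p q r s e = doubleEuler (q + s - e) r q s (r + s - p) := by
  have hmeas : Measurable (Function.uncurry fun x w =>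
      ENNReal.ofReal (triangleKernel p q r s e x w)) := by
    simp only [triangleKernel, Function.uncurry_def]
    fun_prop
  rw [doubleEuler_eq_lintegral_triangleKernel, doubleEuler_eq_lintegral_triangleKernel,
    lintegral_unitSquare_involution hmeas]
  simp_rw [triangleKernel_symm]

end Thomae

section BetaHypergeometric

lemma Cbh_eq (a a' b : ℝ) : Cbh a a' b = (beta a b * F32one a a b (a + b) (a + a'))⁻¹ := by
  rw [Cbh, beta]
  field_simp

lemma bhMeasure_eq_restrict_withDensity (a a' b : ℝ) :
    bhMeasure a a' b = (volume.restrict (Ioo 0 1)).withDensity fun x =>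
      ENNReal.ofReal (Cbh a a' b * x ^ (a - 1) * (1 - x) ^ (b - 1) * F21 a b (a + a') x) := by
  rw [bhMeasure, ← withDensity_indicator measurableSet_Ioo]
  congr 1
  ext x
  by_cases hx : x ∈ Ioo (0 : ℝ) 1
  · rw [indicator_of_mem hx, bhDens, if_pos (mem_Ioo.1 hx)]
  · rw [indicator_of_notMem hx, bhDens, if_neg (mt mem_Ioo.2 hx), ENNReal.ofReal_zero]

variable {a a' b : ℝ}

lemma Cbh_pos (ha : 0 < a) (ha' : 0 < a') (hb : 0 < b) : 0 < Cbh a a' b := by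
  rw [Cbh_eq]
  exact inv_pos.2 (mul_pos (beta_pos ha hb)
    (F32one_pos ha ha hb (add_pos ha hb) (add_pos ha ha') (by linarith)))

lemma lintegral_rpow_bhMeasure (t : ℝ) (ha : 0 < a) (ha' : 0 < a') (hb : 0 < b) :
    ∫⁻ x, ENNReal.ofReal (x ^ t) ∂bhMeasure a a' b =
      ENNReal.ofReal (Cbh a a' b) * ∫⁻ x in Ioo (0 : ℝ) 1,
        ENNReal.ofReal (x ^ (a + t - 1) * (1 - x) ^ (b - 1) * F21 a b (a + a') x) := by
  have hF := measurable_F21 a b (a + a')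
  rw [bhMeasure_eq_restrict_withDensity,
    lintegral_withDensity_eq_lintegral_mul₀ (by fun_prop) (by fun_prop),
    ← lintegral_const_mul' _ _ ENNReal.ofReal_ne_top]
  refine setLIntegral_congr_fun measurableSet_Ioo fun x ⟨hx₀, _⟩ => ?_
  rw [Pi.mul_apply, ← ENNReal.ofReal_mul' (by positivity),
    ← ENNReal.ofReal_mul (Cbh_pos ha ha' hb).le, add_sub_right_comm, rpow_add hx₀]
  congr 1
  ring

lemma isProbabilityMeasure_bhMeasure (ha : 0 < a) (ha' : 0 < a') (hb : 0 < b) :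
    IsProbabilityMeasure (bhMeasure a a' b) := by
  have hC := Cbh_pos ha ha' hb
  have hmass := lintegral_rpow_bhMeasure 0 ha ha' hb
  simp only [rpow_zero, ENNReal.ofReal_one, lintegral_one, add_zero] at hmass
  rw [lintegral_euler_F32one ha hb ha hb (le_add_of_nonneg_right ha'.le),
    ← ofReal_F32one ha ha hb (add_pos ha hb) (add_pos ha ha') (by linarith),
    ← ENNReal.ofReal_mul (beta_pos ha hb).le, ← ENNReal.ofReal_mul hC.le] at hmass
  refine ⟨?_⟩
  rw [hmass, ← ENNReal.ofReal_one, ← mul_inv_cancel₀ hC.ne', Cbh_eq, inv_inv]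

lemma lintegral_rpow_bhMeasure_eq_mul_F32oneENN {t : ℝ} (ha : 0 < a) (ha' : 0 < a') (hb : 0 < b)
    (ht : t < a') :
    ∫⁻ x, ENNReal.ofReal (x ^ t) ∂bhMeasure a a' b =
      ENNReal.ofReal (Cbh a a' b) *
        (ENNReal.ofReal (beta b a') * F32oneENN a' (a' - t) b (a' + b) (a + a')) := by
  have hB : ENNReal.ofReal (beta a a') ≠ 0 := (ENNReal.ofReal_pos.2 (beta_pos ha ha')).ne'
  rw [lintegral_rpow_bhMeasure t ha ha' hb]
  congr 1
  rw [← ENNReal.mul_right_inj hB ENNReal.ofReal_ne_top, beta_mul_lintegral_F21 _ _ ha ha' hb,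
    doubleEuler_thomae, add_sub_cancel_left, add_sub_add_left_eq_sub,
    doubleEuler_eq_F32oneENN ha' ha hb ha' (sub_pos.2 ht), beta_comm a' a, add_comm b a',
    add_comm a' a]
  ring

end BetaHypergeometric

theorem bh_mellin_second_form_general {a a' b t : ℝ} (ha : 0 < a) (ha' : 0 < a') (hb : 0 < b)
    (ht : t < a') :
    ∫⁻ x, ENNReal.ofReal (x ^ t) ∂bhMeasure a a' b =
      F32oneENN a' (a' - t) b (a' + b) (a + a') / F32oneENN a' a' b (a' + b) (a + a') := by
  have := isProbabilityMeasure_bhMeasure ha ha' hb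
  have hmass := lintegral_rpow_bhMeasure_eq_mul_F32oneENN ha ha' hb ha'
  simp only [rpow_zero, ENNReal.ofReal_one, lintegral_one, measure_univ, sub_zero,
    ← mul_assoc] at hmass
  rw [lintegral_rpow_bhMeasure_eq_mul_F32oneENN ha ha' hb ht, ← mul_assoc,
    ENNReal.eq_inv_of_mul_eq_one_left hmass.symm, ENNReal.div_eq_inv_mul]

-- For `t ≤ -a` the moment and the numerator diverge, and both sides are `0` by convention.
lemma integral_rpow_bhMeasure {a a' b t : ℝ} (ha : 0 < a) (ha' : 0 < a') (hb : 0 < b)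
    (ht : t < a') :
    ∫ x, x ^ t ∂bhMeasure a a' b =
      F32one a' (a' - t) b (a' + b) (a + a') / F32one a' a' b (a' + b) (a + a') := by
  have hnonneg : ∀ᵐ x ∂bhMeasure a a' b, 0 ≤ x ^ t := by
    rw [bhMeasure_eq_restrict_withDensity]
    refine (withDensity_absolutelyContinuous _ _).ae_le ?_
    filter_upwards [ae_restrict_mem measurableSet_Ioo] with x hx using rpow_nonneg hx.1.le t
  rw [integral_eq_lintegral_of_nonneg_ae hnonneg (by fun_prop),
    bh_mellin_second_form_general ha ha' hb ht, ENNReal.toReal_div,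
    toReal_F32oneENN ha' (sub_pos.2 ht) hb (add_pos ha' hb) (add_pos ha ha'),
    toReal_F32oneENN ha' ha' hb (add_pos ha' hb) (add_pos ha ha')]

theorem bh_mellin_second_form {Ω : Type*} [MeasurableSpace Ω] (μ : Measure Ω)
    [IsProbabilityMeasure μ] (X : Ω → ℝ) (hX : Measurable X)
    (hXval : ∀ ω, X ω ∈ Set.Ioo (0 : ℝ) 1)
    (a a' b : ℝ) (ha : 0 < a) (ha' : 0 < a') (hb : 0 < b)
    (hXlaw : μ.map X = bhMeasure a a' b)
    (t : ℝ) (ht1 : -b < t) (ht2 : t < a') :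
    ∫ ω, X ω ^ t ∂μ =
      F32one a' (a' - t) b (a' + b) (a + a') / F32one a' a' b (a' + b) (a + a') := by
  rw [← integral_rpow_bhMeasure ha ha' hb ht2, ← hXlaw,
    integral_map hX.aemeasurable (by fun_prop)]
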